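/- Let m ≥ 7 be odd, h = (m−1)/2, and let f₅(x) = x^{2^{2h} − 2^h + 1} (the Kasami monomial x^{2^{m−1} − 2^{(m−1)/2} + 1}). For the binary sequence s_t = Tr(f₅(α^t + 1)), the linear span is L_s = 1 + m(2^{(m−1)/2} − 1) if m ≡ 1 (mod 4), and L_s = 1 + m(2^{(m−1)/2} − 3) if m ≡ 3 (mod 4). -/

import Mathlib

open Polynomial
open scoped Classical

/-- The polynomial S(x) = ∑_{t=0}^{v−1} s_t x^t ∈ 𝔽₂[x], where
    s_t = Tr(f(α^t + 1)) and v = 2^m − 1. -/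
noncomputable def traceSeqPoly (m : ℕ) (α : GaloisField 2 m)
    (f : GaloisField 2 m → GaloisField 2 m) : Polynomial (ZMod 2) :=
  ∑ t ∈ Finset.range (2 ^ m - 1),
    C (Algebra.trace (ZMod 2) (GaloisField 2 m) (f (α ^ t + 1))) * X ^ t

/-- The minimal polynomial of the sequence:
    g_s(x) = (x^v − 1)/gcd(x^v − 1, S(x)). Its degree is the linear span L_s. -/
noncomputable def genPoly (m : ℕ) (α : GaloisField 2 m)
    (f : GaloisField 2 m → GaloisField 2 m) : Polynomial (ZMod 2) :=
  (X ^ (2 ^ m - 1) - 1) /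
    EuclideanDomain.gcd (X ^ (2 ^ m - 1) - 1) (traceSeqPoly m α f)

/-- The binary cyclic code C_s = {c ∈ 𝔽₂[x] : deg c < v and g_s ∣ c},
    as an 𝔽₂-submodule of 𝔽₂[x]. -/
noncomputable def codeC (m : ℕ) (α : GaloisField 2 m)
    (f : GaloisField 2 m → GaloisField 2 m) :
    Submodule (ZMod 2) (Polynomial (ZMod 2)) :=
  Polynomial.degreeLT (ZMod 2) (2 ^ m - 1) ⊓
    (Ideal.span {genPoly m α f}).restrictScalars (ZMod 2)

/-- The set of Hamming weights (numbers of nonzero coefficients) of the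
    nonzero codewords of a code; the minimum distance is its least element. -/
def wtSet (Cs : Submodule (ZMod 2) (Polynomial (ZMod 2))) : Set ℕ :=
  {w | ∃ c : Polynomial (ZMod 2), c ∈ Cs ∧ c ≠ 0 ∧ c.support.card = w}

/-!
The linear span of `s` counts the powers of `α` that occur in the expansion of `s t` as a
combination of exponentials `γ ^ t`. Writing `2 ^ (2 * h) - 2 ^ h + 1 = 2 ^ h * (2 ^ h - 1) + 1` and
`(y + 1) ^ (2 ^ h - 1) = 1 + y + ⋯ + y ^ (2 ^ h - 1)`, the sequence becomes `∑ Tr (y ^ k)` with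
`y = α ^ t` and `k` running over `[0, 2 ^ h) ∪ [2 ^ (h + 1), 3 * 2 ^ h)`. Since
`Tr (y ^ (2 * k)) = Tr (y ^ k)`, this sum folds onto its odd exponents `r`, and `r` survives when an
odd number of its multiples `2 ^ i * r` lie in the range. Among the survivors only `2 ^ h + 1` and
`2 ^ (h + 1) + 1` share a 2-cyclotomic coset, and they cancel. Each remaining `r` contributes the
`2 * h + 1` conjugates of `α ^ r`, and `Tr 1 = 1` contributes one more term.
-/

section LinearSpan

variable {F K : Type*} [Field F] [Field K] [Algebra F K]

/-- The linear span of a sequence `s` of period dividing `v`: the degree of its minimal polynomial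
`(x ^ v - 1) / gcd (x ^ v - 1, s₀ + s₁ x + ⋯ + s_{v-1} x ^ (v - 1))`. -/
noncomputable def linearSpan (v : ℕ) (s : ℕ → F) : ℕ :=
  ((X ^ v - 1) /
    EuclideanDomain.gcd (X ^ v - 1) (∑ t ∈ Finset.range v, C (s t) * X ^ t)).natDegree

lemma natDegree_div_gcd_eq_ncard {P : F[X]} (S : F[X]) (hP : P.Separable)
    (hsplit : (P.map (algebraMap F K)).Splits) :
    (P / EuclideanDomain.gcd P S).natDegree = {β ∈ P.rootSet K | aeval β S ≠ 0}.ncard := by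
  set G := EuclideanDomain.gcd P S
  have hP0 : P ≠ 0 := hP.ne_zero
  have hGP : G ∣ P := EuclideanDomain.gcd_dvd_left P S
  have hmul : G * (P / G) = P :=
    EuclideanDomain.mul_div_cancel' (ne_zero_of_dvd_ne_zero hP0 hGP) hGP
  have ncard_rootSet {Q : F[X]} (hQ : Q ∣ P) : (Q.rootSet K).ncard = Q.natDegree := by
    rw [← card_rootSet_eq_natDegree (hP.of_dvd hQ)
      (hsplit.of_dvd (Polynomial.map_ne_zero hP0) (Polynomial.map_dvd _ hQ)),
      Set.ncard_eq_toFinset_card', Set.toFinset_card]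
  have rootSet_G : G.rootSet K = {β ∈ P.rootSet K | aeval β S = 0} := by
    ext β
    simp only [Set.mem_ofPred_eq, mem_rootSet, ne_eq, hP0, not_false_eq_true, true_and, aeval_def,
      ne_zero_of_dvd_ne_zero hP0 hGP]
    exact root_gcd_iff_root_left_right
  have degree_add : G.natDegree + (P / G).natDegree = P.natDegree := by
    rw [← natDegree_mul, hmul] <;> exact fun h => hP0 (by rw [← hmul, h]; simp)
  have ncard_add : (G.rootSet K).ncard + {β ∈ P.rootSet K | aeval β S ≠ 0}.ncard
      = (P.rootSet K).ncard := by
    rw [rootSet_G]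
    exact Set.ncard_inter_add_ncard_sdiff_eq_ncard _ {β | aeval β S = 0} (rootSet_finite P K)
  rw [ncard_rootSet hGP, ncard_rootSet dvd_rfl] at ncard_add
  omega

lemma sum_range_pow_of_pow_eq_one {γ : K} {v : ℕ} (hγ : γ ^ v = 1) :
    ∑ t ∈ Finset.range v, γ ^ t = if γ = 1 then (v : K) else 0 := by
  split_ifs with h
  · simp [h]
  · rw [geom_sum_eq h, hγ, sub_self, zero_div]

lemma linearSpan_eq_card {v : ℕ} [NeZero v] {ζ : K} (hζ : IsPrimitiveRoot ζ v) {s : ℕ → F}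
    {Γ : Finset K} {c : K → K} (hΓ : ∀ γ ∈ Γ, γ ^ v = 1) (hc : ∀ γ ∈ Γ, c γ ≠ 0)
    (hs : ∀ t, algebraMap F K (s t) = ∑ γ ∈ Γ, c γ * γ ^ t) :
    linearSpan v s = Γ.card := by
  have hvK : (v : K) ≠ 0 := hζ.neZero'.ne
  have hvF : (v : F) ≠ 0 := fun h => hvK (by simpa using congrArg (algebraMap F K) h)
  have hsplit : ((X ^ v - 1 : F[X]).map (algebraMap F K)).Splits := by
    simpa using X_pow_sub_one_splits hζ
  have aeval_eq {β : K} (hβ : β ^ v = 1) :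
      aeval β (∑ t ∈ Finset.range v, C (s t) * X ^ t) = if β⁻¹ ∈ Γ then c β⁻¹ * v else 0 := by
    have hβ0 : β ≠ 0 := by rintro rfl; simp [NeZero.ne v] at hβ
    calc aeval β (∑ t ∈ Finset.range v, C (s t) * X ^ t)
        = ∑ t ∈ Finset.range v, ∑ γ ∈ Γ, c γ * (γ * β) ^ t := by
          simp only [map_sum, map_mul, aeval_C, map_pow, aeval_X, hs, Finset.sum_mul, mul_pow,
            mul_assoc]
      _ = ∑ γ ∈ Γ, c γ * ∑ t ∈ Finset.range v, (γ * β) ^ t := by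
          rw [Finset.sum_comm]; simp only [Finset.mul_sum]
      _ = ∑ γ ∈ Γ, if β⁻¹ = γ then c γ * v else 0 := by
          refine Finset.sum_congr rfl fun γ hγ => ?_
          rw [sum_range_pow_of_pow_eq_one (by rw [mul_pow, hΓ γ hγ, hβ, one_mul]), mul_ite,
            mul_zero]
          simp only [mul_eq_one_iff_eq_inv₀ hβ0, eq_comm]
      _ = if β⁻¹ ∈ Γ then c β⁻¹ * v else 0 := Finset.sum_ite_eq ..
  have nonroots : {β ∈ (X ^ v - 1 : F[X]).rootSet K |
      aeval β (∑ t ∈ Finset.range v, C (s t) * X ^ t) ≠ 0} = (Γ : Set K)⁻¹ := by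
    ext β
    have mem_rootSet_iff : β ∈ (X ^ v - 1 : F[X]).rootSet K ↔ β ^ v = 1 := by
      simp [mem_rootSet, (X_pow_sub_one_separable_iff.2 hvF).ne_zero, sub_eq_zero]
    rw [Set.mem_ofPred_eq, mem_rootSet_iff, Set.mem_inv, Finset.mem_coe]
    constructor
    · rintro ⟨hβ, h⟩
      by_contra hmem
      exact h (by rw [aeval_eq hβ, if_neg hmem])
    · intro hmem
      have hβ : β ^ v = 1 := by simpa using hΓ _ hmem
      exact ⟨hβ, by rw [aeval_eq hβ, if_pos hmem]; exact mul_ne_zero (hc _ hmem) hvK⟩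
  rw [linearSpan, natDegree_div_gcd_eq_ncard _ (X_pow_sub_one_separable_iff.2 hvF) hsplit, nonroots,
    Set.ncard_inv, Set.ncard_coe_finset]

end LinearSpan

section Trace

lemma sub_one_pow_char_pow_sub_one {R : Type*} [CommRing R] (p : ℕ) [Fact p.Prime] [CharP R p]
    (n : ℕ) (z : R) : (z - 1) ^ (p ^ n - 1) = ∑ k ∈ Finset.range (p ^ n), z ^ k := by
  -- In `(ZMod p)[X]` the factor `X - 1` can be cancelled, which `z - 1` cannot in general.
  have universal : (X - 1 : (ZMod p)[X]) ^ (p ^ n - 1) = ∑ k ∈ Finset.range (p ^ n), X ^ k := by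
    refine mul_right_cancel₀ (X_sub_C_ne_zero (1 : ZMod p)) ?_
    rw [C_1, geom_sum_mul, pow_sub_one_mul (pow_ne_zero n (NeZero.ne p)), sub_pow_char_pow, one_pow]
  simpa [eval₂_pow, eval₂_finsetSum] using congrArg (eval₂ (ZMod.castHom dvd_rfl R) z) universal

lemma trace_pow_card_pow {F K : Type*} [Field F] [Fintype F] [Field K] [Finite K] [Algebra F K]
    (n : ℕ) (x : K) :
    Algebra.trace F K (x ^ Fintype.card F ^ n) = Algebra.trace F K x := by
  induction n with
  | zero => simp
  | succ n ih =>
    rw [pow_succ, pow_mul, ← ih]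
    exact Algebra.trace_eq_of_algEquiv (FiniteField.frobeniusAlgEquivOfAlgebraic F K) _

variable {K : Type*} [Field K] [Finite K] [Algebra (ZMod 2) K]

lemma trace_pow_two_pow_mul (n k : ℕ) (y : K) :
    Algebra.trace (ZMod 2) K (y ^ (2 ^ n * k)) = Algebra.trace (ZMod 2) K (y ^ k) := by
  simpa [ZMod.card, ← pow_mul, mul_comm k] using trace_pow_card_pow (F := ZMod 2) n (y ^ k)

lemma trace_pow_two_pow_mul_add_one {h : ℕ} (hK : Module.finrank (ZMod 2) K = 2 * h + 1)
    (k : ℕ) (y : K) :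
    Algebra.trace (ZMod 2) K (y ^ (2 ^ h * k + 1))
      = Algebra.trace (ZMod 2) K (y ^ (2 ^ (h + 1) + k)) := by
  have := Fintype.ofFinite K
  have pow_card : y ^ 2 ^ (2 * h + 1) = y := by
    rw [← hK, FiniteField.pow_finrank_eq_card, FiniteField.pow_card]
  rw [← trace_pow_two_pow_mul (h + 1),
    show 2 ^ (h + 1) * (2 ^ h * k + 1) = 2 ^ (h + 1) + 2 ^ (2 * h + 1) * k by ring,
    pow_add, pow_mul, pow_card, ← pow_add]

lemma trace_add_one_pow_kasami {h : ℕ} (hK : Module.finrank (ZMod 2) K = 2 * h + 1) (y : K) :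
    Algebra.trace (ZMod 2) K ((y + 1) ^ (2 ^ (2 * h) - 2 ^ h + 1))
      = ∑ k ∈ Finset.range (2 ^ h), Algebra.trace (ZMod 2) K (y ^ k)
        + ∑ k ∈ Finset.Ico (2 ^ (h + 1)) (3 * 2 ^ h), Algebra.trace (ZMod 2) K (y ^ k) := by
  have : CharP K 2 := (Algebra.charP_iff (ZMod 2) K 2).1 inferInstance
  have exponent : 2 ^ (2 * h) - 2 ^ h + 1 = (2 ^ h - 1) * 2 ^ h + 1 := by
    rw [Nat.sub_mul, one_mul, ← pow_add, two_mul]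
  have expansion : (y + 1) ^ (2 ^ (2 * h) - 2 ^ h + 1)
      = ∑ k ∈ Finset.range (2 ^ h), y ^ (2 ^ h * k)
        + ∑ k ∈ Finset.range (2 ^ h), y ^ (2 ^ h * k + 1) := by
    rw [exponent, pow_succ, pow_mul, ← CharTwo.sub_eq_add, sub_one_pow_char_pow_sub_one 2,
      CharTwo.sub_eq_add, sum_pow_char_pow, mul_add, mul_one, add_comm, Finset.sum_mul]
    simp only [← pow_mul, pow_succ, mul_comm (2 ^ h)]
  rw [expansion, map_add, map_sum, map_sum, Finset.sum_Ico_eq_sum_range,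
    show 3 * 2 ^ h - 2 ^ (h + 1) = 2 ^ h by rw [pow_succ]; omega]
  simp only [trace_pow_two_pow_mul, trace_pow_two_pow_mul_add_one hK]

end Trace

section Leaders

/-- The odd numbers in `[a, b)`. -/
def oddIco (a b : ℕ) : Finset ℕ := {k ∈ Finset.Ico a b | Odd k}

lemma sum_Ico_two_mul {M : Type*} [AddCommMonoid M] (T : ℕ → M) (a b : ℕ) :
    ∑ k ∈ Finset.Ico (2 * a) (2 * b), T k
      = ∑ k ∈ Finset.Ico a b, T (2 * k) + ∑ k ∈ oddIco (2 * a) (2 * b), T k := by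
  have evens : {k ∈ Finset.Ico (2 * a) (2 * b) | ¬ Odd k} = (Finset.Ico a b).image (2 * ·) := by
    ext k
    simp only [Finset.mem_filter, Finset.mem_Ico, Finset.mem_image, Nat.not_odd_iff_even]
    constructor
    · rintro ⟨hk, j, rfl⟩
      exact ⟨j, by omega, by omega⟩
    · rintro ⟨j, hj, rfl⟩
      exact ⟨by omega, even_two_mul j⟩
  rw [← Finset.sum_filter_add_sum_filter_not _ Odd, evens, add_comm,
    Finset.sum_image (mul_right_injective₀ two_ne_zero).injOn, oddIco]

lemma card_oddIco_two_mul (a b : ℕ) : (oddIco (2 * a) (2 * b)).card = b - a := by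
  have := sum_Ico_two_mul (fun _ => 1) a b
  simp only [Finset.sum_const, Nat.card_Ico, smul_eq_mul, mul_one] at this
  omega

/-- The odd numbers with `n + 1` binary digits whose expansion does not start with `11`. The bound
`3 * 2 ^ (n - 1)` is doubled to avoid truncated subtraction at `n = 0`. -/
def oddsOneZero (n : ℕ) : Finset ℕ := {k ∈ oddIco (2 ^ n) (2 ^ (n + 1)) | 2 * k < 3 * 2 ^ n}

lemma mem_oddsOneZero {n k : ℕ} : k ∈ oddsOneZero n ↔ Odd k ∧ 2 ^ n ≤ k ∧ 2 * k < 3 * 2 ^ n := by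
  simp only [oddsOneZero, oddIco, Finset.mem_filter, Finset.mem_Ico, pow_succ]
  grind

lemma oddsOneZero_succ (n : ℕ) : oddsOneZero (n + 1) = oddIco (2 ^ (n + 1)) (3 * 2 ^ n) := by
  ext k
  simp only [mem_oddsOneZero, oddIco, Finset.mem_filter, Finset.mem_Ico, pow_succ]
  grind

lemma card_oddsOneZero_add_two (n : ℕ) : (oddsOneZero (n + 2)).card = 2 ^ n := by
  rw [oddsOneZero_succ, show 2 ^ (n + 2) = 2 * 2 ^ (n + 1) by ring,
    show 3 * 2 ^ (n + 1) = 2 * (3 * 2 ^ n) by ring, card_oddIco_two_mul, pow_succ]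
  omega

/-- The odd `r < 2 ^ n` with an odd number of multiples `2 ^ i * r` in
`[0, 2 ^ n) ∪ [2 ^ (n + 1), 3 * 2 ^ n)`. In the recursion, doubling carries the multiples of `r` at
level `n` to those at level `n + 1` other than `r` itself, so the parity flips. -/
def shortLeaders : ℕ → Finset ℕ
  | 0 => ∅
  | n + 1 => oddIco 0 (2 ^ (n + 1)) \ (shortLeaders n ∪ oddsOneZero n)

lemma shortLeaders_subset (n : ℕ) : shortLeaders n ⊆ oddIco 0 (2 ^ n) := by
  cases n with
  | zero => exact Finset.empty_subset _
  | succ n => exact Finset.sdiff_subset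

lemma odd_and_lt_of_mem_shortLeaders {n r : ℕ} (hr : r ∈ shortLeaders n) : Odd r ∧ r < 2 ^ n := by
  have := shortLeaders_subset n hr
  simp only [oddIco, Finset.mem_filter, Finset.mem_Ico] at this
  exact ⟨this.2, this.1.2⟩

lemma disjoint_shortLeaders_oddsOneZero {n k : ℕ} (hnk : n ≤ k) :
    Disjoint (shortLeaders n) (oddsOneZero k) := by
  rw [Finset.disjoint_left]
  intro r hr hr'
  have := (odd_and_lt_of_mem_shortLeaders hr).2
  have := (mem_oddsOneZero.1 hr').2.1
  have := Nat.pow_le_pow_right two_pos hnk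
  omega

lemma disjoint_oddsOneZero_succ (n : ℕ) : Disjoint (oddsOneZero n) (oddsOneZero (n + 1)) := by
  rw [Finset.disjoint_left]
  intro r hr hr'
  rw [mem_oddsOneZero] at hr hr'
  omega

lemma shortLeaders_union_subset (n : ℕ) :
    shortLeaders n ∪ oddsOneZero n ⊆ oddIco 0 (2 ^ (n + 1)) := by
  intro r hr
  simp only [oddIco, Finset.mem_filter, Finset.mem_Ico, pow_succ]
  rcases Finset.mem_union.1 hr with hr | hr
  · have := odd_and_lt_of_mem_shortLeaders hr
    exact ⟨by omega, this.1⟩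
  · rw [mem_oddsOneZero] at hr
    exact ⟨by omega, hr.1⟩

lemma card_shortLeaders_succ (n : ℕ) :
    (shortLeaders (n + 1)).card + (shortLeaders n).card + (oddsOneZero n).card = 2 ^ n := by
  have card_odds := card_oddIco_two_mul 0 (2 ^ n)
  rw [mul_zero, ← pow_succ', Nat.sub_zero] at card_odds
  rw [add_assoc, ← Finset.card_union_of_disjoint (disjoint_shortLeaders_oddsOneZero le_rfl),
    shortLeaders, Finset.card_sdiff_add_card_eq_card (shortLeaders_union_subset n), card_odds]

lemma card_shortLeaders_add_two (n : ℕ) :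
    ((shortLeaders (n + 2)).card : ℤ) = 2 ^ n + (-1) ^ n := by
  induction n with
  | zero => rfl
  | succ n ih =>
    have := card_shortLeaders_succ (n + 2)
    rw [card_oddsOneZero_add_two] at this
    zify at this
    rw [ih] at this
    linear_combination this

lemma sum_eq_sum_shortLeaders {R : Type*} [CommRing R] [CharP R 2] {T : ℕ → R}
    (hT : ∀ k, T (2 * k) = T k) (n : ℕ) :
    ∑ k ∈ Finset.range (2 ^ n), T k + ∑ k ∈ Finset.Ico (2 ^ (n + 1)) (3 * 2 ^ n), T k
      = T 0 + ∑ r ∈ shortLeaders n, T r + ∑ r ∈ oddsOneZero n, T r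
        + ∑ r ∈ oddsOneZero (n + 1), T r := by
  induction n with
  | zero =>
    have h0 : oddsOneZero 0 = {1} := by decide
    have h1 : oddsOneZero 1 = ∅ := by decide
    simpa [shortLeaders, h0, h1] using hT 1
  | succ n ih =>
    have low := sum_Ico_two_mul T 0 (2 ^ n)
    have high := sum_Ico_two_mul T (2 ^ (n + 1)) (3 * 2 ^ n)
    have odds := Finset.sum_sdiff (f := T) (shortLeaders_union_subset n)
    rw [Finset.sum_union (disjoint_shortLeaders_oddsOneZero le_rfl), ← shortLeaders] at odds
    simp only [hT, mul_zero, ← pow_succ', mul_left_comm 2 3, ← Finset.range_eq_Ico,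
      ← oddsOneZero_succ] at low high
    rw [low, high]
    linear_combination ih - odds + CharTwo.add_self_eq_zero (∑ r ∈ shortLeaders n, T r)
      + CharTwo.add_self_eq_zero (∑ r ∈ oddsOneZero n, T r)

/-- Representatives of the 2-cyclotomic cosets modulo `2 ^ (2 * h + 1) - 1`, other than `{0}`, that
carry the spectrum of the Kasami sequence. The two removed numbers lie in the same coset, so that
their contributions cancel in characteristic two. -/
def leaders (h : ℕ) : Finset ℕ :=
  (shortLeaders h ∪ (oddsOneZero h ∪ oddsOneZero (h + 1))) \ {2 ^ h + 1, 2 ^ (h + 1) + 1}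

lemma two_pow_add_one_mem_oddsOneZero {n : ℕ} (hn : 2 ≤ n) : 2 ^ n + 1 ∈ oddsOneZero n := by
  have : 2 ^ 2 ≤ 2 ^ n := Nat.pow_le_pow_right two_pos hn
  exact mem_oddsOneZero.2 ⟨(even_two.pow_of_ne_zero (by omega)).add_one, by omega, by omega⟩

lemma disjoint_shortLeaders_union (h : ℕ) :
    Disjoint (shortLeaders h) (oddsOneZero h ∪ oddsOneZero (h + 1)) :=
  Finset.disjoint_union_right.2
    ⟨disjoint_shortLeaders_oddsOneZero le_rfl, disjoint_shortLeaders_oddsOneZero h.le_succ⟩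

lemma pair_subset_shortLeaders_union {h : ℕ} (hh : 2 ≤ h) :
    {2 ^ h + 1, 2 ^ (h + 1) + 1} ⊆ shortLeaders h ∪ (oddsOneZero h ∪ oddsOneZero (h + 1)) := by
  simp [Finset.insert_subset_iff, two_pow_add_one_mem_oddsOneZero hh,
    two_pow_add_one_mem_oddsOneZero (hh.trans h.le_succ)]

lemma card_leaders {h : ℕ} (hh : 2 ≤ h) :
    (leaders h).card = if Even h then 2 ^ h - 1 else 2 ^ h - 3 := by
  obtain ⟨n, rfl⟩ := Nat.exists_eq_add_of_le' hh
  have card_pair : ({2 ^ (n + 2) + 1, 2 ^ (n + 2 + 1) + 1} : Finset ℕ).card = 2 :=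
    Finset.card_pair (by simp [pow_succ])
  have total := Finset.card_sdiff_add_card_eq_card (pair_subset_shortLeaders_union hh)
  rw [← leaders, card_pair, Finset.card_union_of_disjoint (disjoint_shortLeaders_union _),
    Finset.card_union_of_disjoint (disjoint_oddsOneZero_succ _), card_oddsOneZero_add_two,
    card_oddsOneZero_add_two] at total
  have short := card_shortLeaders_add_two n
  simp only [pow_succ, Nat.even_add, even_two, iff_true] at total ⊢
  split_ifs with hn
  · rw [hn.neg_one_pow] at short
    norm_cast at short
    omega
  · rw [(Nat.not_even_iff_odd.1 hn).neg_one_pow, ← sub_eq_add_neg, eq_sub_iff_add_eq] at short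
    norm_cast at short
    omega

lemma sum_eq_sum_leaders {R : Type*} [CommRing R] [CharP R 2] {T : ℕ → R}
    (hT : ∀ k, T (2 * k) = T k) {h : ℕ} (hh : 2 ≤ h)
    (hcoset : T (2 ^ h + 1) = T (2 ^ (h + 1) + 1)) :
    ∑ k ∈ Finset.range (2 ^ h), T k + ∑ k ∈ Finset.Ico (2 ^ (h + 1)) (3 * 2 ^ h), T k
      = T 0 + ∑ r ∈ leaders h, T r := by
  have sum_pair : ∑ r ∈ {2 ^ h + 1, 2 ^ (h + 1) + 1}, T r = 0 := by
    rw [Finset.sum_pair (by simp [pow_succ]), hcoset, CharTwo.add_self_eq_zero]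
  have total := Finset.sum_sdiff (f := T) (pair_subset_shortLeaders_union hh)
  rw [← leaders, sum_pair, add_zero, Finset.sum_union (disjoint_shortLeaders_union h),
    Finset.sum_union (disjoint_oddsOneZero_succ h)] at total
  rw [sum_eq_sum_shortLeaders hT, total]
  ring

end Leaders

section Cosets

/-- A representative of its 2-cyclotomic coset modulo `2 ^ (2 * h + 1) - 1`. Odd numbers below
`3 * 2 ^ h` lie in distinct cosets, except that `2 ^ (h + 1) + 1` shares its coset with `2 ^ h + 1`;
it is excluded. -/
def IsCosetLeader (h r : ℕ) : Prop := Odd r ∧ r < 3 * 2 ^ h ∧ r ≠ 2 ^ (h + 1) + 1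

lemma isCosetLeader_of_mem_leaders {h r : ℕ} (hr : r ∈ leaders h) : IsCosetLeader h r := by
  simp only [leaders, Finset.mem_sdiff, Finset.mem_union, Finset.mem_insert,
    Finset.mem_singleton, mem_oddsOneZero, not_or, pow_succ] at hr
  rw [IsCosetLeader, pow_succ]
  rcases hr with ⟨hr | hr | hr, hne⟩
  · have := odd_and_lt_of_mem_shortLeaders hr
    exact ⟨this.1, by omega, hne.2⟩
  · exact ⟨hr.1, by omega, hne.2⟩
  · exact ⟨hr.1, by omega, hne.2⟩

lemma three_mul_two_pow_le {h : ℕ} (hh : h ≠ 0) : 3 * 2 ^ h ≤ 2 ^ (2 * h + 1) - 1 := by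
  have : 2 ≤ 2 ^ h := Nat.le_self_pow hh 2
  have : 2 ^ (2 * h + 1) = 2 * 2 ^ h * 2 ^ h := by ring
  have : 4 * 2 ^ h ≤ 2 * 2 ^ h * 2 ^ h := Nat.mul_le_mul_right _ (by omega)
  omega

lemma two_pow_mul_lt {h d r : ℕ} (hr : r < 3 * 2 ^ h) (hdh : d < h) :
    2 ^ d * r < 2 ^ (2 * h + 1) - 1 := by
  have two_pow_le : 2 ^ d * 2 ≤ 2 ^ h := by
    rw [← pow_succ]
    exact Nat.pow_le_pow_right two_pos hdh
  have : 2 ^ (2 * h + 1) = 2 * (2 ^ h * 2 ^ h) := by ring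
  have : 2 ^ d * 2 * (r + 1) ≤ 2 ^ h * (3 * 2 ^ h) := Nat.mul_le_mul two_pow_le hr
  have : 1 ≤ 2 ^ d := Nat.one_le_two_pow
  have : 2 ^ h ≤ 2 ^ h * 2 ^ h := Nat.le_mul_self _
  nlinarith [Nat.sub_add_cancel (Nat.one_le_two_pow (n := 2 * h + 1))]

lemma IsCosetLeader.even_or_le_two_pow_mul_mod {h d r : ℕ} (hr : IsCosetLeader h r) (hd : d ≠ 0)
    (hdh : d ≤ h) :
    Even (2 ^ d * r % (2 ^ (2 * h + 1) - 1)) ∨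
      3 * 2 ^ h ≤ 2 ^ d * r % (2 ^ (2 * h + 1) - 1) := by
  obtain ⟨r_odd, r_lt, r_ne⟩ := hr
  by_cases no_wrap : 2 ^ d * r < 2 ^ (2 * h + 1) - 1
  · left
    rw [Nat.mod_eq_of_lt no_wrap]
    exact (even_two.pow_of_ne_zero hd).mul_right r
  · right
    obtain rfl : d = h := hdh.eq_of_not_lt fun hlt => no_wrap (two_pow_mul_lt r_lt hlt)
    have q_ge : 2 ≤ 2 ^ d := Nat.le_self_pow hd 2
    have modulus : 2 ^ (2 * d + 1) = 2 * 2 ^ d * 2 ^ d := by ring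
    have r_ge : 2 * 2 ^ d ≤ r := by
      by_contra! hlt
      have : 2 ^ d * (r + 1) ≤ 2 ^ d * (2 * 2 ^ d) := Nat.mul_le_mul_left _ hlt
      refine no_wrap ?_
      rw [modulus]
      nlinarith [Nat.sub_add_cancel (show 1 ≤ 2 * 2 ^ d * 2 ^ d by nlinarith)]
    obtain ⟨r₀, rfl⟩ := Nat.exists_eq_add_of_le r_ge
    have r₀_ge : 3 ≤ r₀ := by
      rw [pow_succ] at r_ne
      obtain ⟨a, ha⟩ := r_odd
      omega
    have wrap : 2 ^ d * (2 * 2 ^ d + r₀) = 2 ^ d * r₀ + 1 + (2 ^ (2 * d + 1) - 1) := by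
      have : 2 ^ d * (2 * 2 ^ d + r₀) = 2 ^ (2 * d + 1) + 2 ^ d * r₀ := by ring
      have := Nat.one_le_two_pow (n := 2 * d + 1)
      omega
    have residue_lt : 2 ^ d * r₀ + 1 < 2 ^ (2 * d + 1) - 1 := by
      have : 2 ^ d * r₀ + 2 ^ d ≤ 2 ^ d * 2 ^ d := by
        rw [← mul_add_one]
        exact Nat.mul_le_mul_left _ (by omega)
      have : 2 * 2 ^ d ≤ 2 ^ d * 2 ^ d := Nat.mul_le_mul_right _ q_ge
      rw [modulus, mul_assoc]
      omega
    rw [wrap, Nat.add_mod_right, Nat.mod_eq_of_lt residue_lt]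
    have : 2 ^ d * 3 ≤ 2 ^ d * r₀ := Nat.mul_le_mul_left _ r₀_ge
    omega

lemma IsCosetLeader.not_two_pow_mul_modEq {h d r s : ℕ} (hr : IsCosetLeader h r)
    (hs : IsCosetLeader h s) (hd : d ≠ 0) (hdh : d ≤ h) :
    ¬ 2 ^ d * r ≡ s [MOD 2 ^ (2 * h + 1) - 1] := by
  intro hmod
  obtain ⟨s_odd, s_lt, -⟩ := hs
  have residue := hr.even_or_le_two_pow_mul_mod hd hdh
  rw [hmod, Nat.mod_eq_of_lt (s_lt.trans_le (three_mul_two_pow_le (by omega)))] at residue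
  rcases residue with s_even | s_ge
  · exact Nat.not_even_iff_odd.2 s_odd s_even
  · exact s_ge.not_gt s_lt

lemma two_pow_modEq_one (n : ℕ) : 2 ^ n ≡ 1 [MOD 2 ^ n - 1] :=
  ((Nat.modEq_iff_dvd' Nat.one_le_two_pow).2 dvd_rfl).symm

lemma coprime_two_pow_sub_one {n : ℕ} (hn : n ≠ 0) (k : ℕ) : Nat.Coprime (2 ^ n - 1) (2 ^ k) :=
  Nat.Coprime.pow_right k <| Nat.coprime_two_right.2 <|
    Nat.Even.sub_odd Nat.one_le_two_pow (even_two.pow_of_ne_zero hn) odd_one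

lemma IsCosetLeader.eq_of_two_pow_mul_modEq {h d r s : ℕ} (hh : h ≠ 0) (hr : IsCosetLeader h r)
    (hs : IsCosetLeader h s) (hd : d < 2 * h + 1) (hmod : 2 ^ d * r ≡ s [MOD 2 ^ (2 * h + 1) - 1]) :
    d = 0 ∧ r = s := by
  rcases eq_or_ne d 0 with rfl | hd0
  · rw [pow_zero, one_mul] at hmod
    exact ⟨rfl, hmod.eq_of_lt_of_lt (hr.2.1.trans_le (three_mul_two_pow_le hh))
      (hs.2.1.trans_le (three_mul_two_pow_le hh))⟩
  · exfalso
    rcases le_or_gt d h with hdh | hdh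
    · exact hr.not_two_pow_mul_modEq hs hd0 hdh hmod
    · have reversed : 2 ^ (2 * h + 1 - d) * s ≡ r [MOD 2 ^ (2 * h + 1) - 1] := by
        refine (hmod.mul_left (2 ^ (2 * h + 1 - d))).symm.trans ?_
        rw [← mul_assoc, ← pow_add, Nat.sub_add_cancel hd.le]
        simpa using (two_pow_modEq_one (2 * h + 1)).mul_right r
      exact hs.not_two_pow_mul_modEq hr (by omega) (by omega) reversed

lemma IsCosetLeader.eq_of_two_pow_mul_modEq_two_pow_mul {h i j r s : ℕ} (hh : h ≠ 0)
    (hr : IsCosetLeader h r) (hs : IsCosetLeader h s) (hi : i < 2 * h + 1) (hj : j < 2 * h + 1)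
    (hmod : 2 ^ i * r ≡ 2 ^ j * s [MOD 2 ^ (2 * h + 1) - 1]) : i = j ∧ r = s := by
  wlog hij : i ≤ j generalizing i j r s
  · obtain ⟨hji, hsr⟩ := this hs hr hj hi hmod.symm (by omega)
    exact ⟨hji.symm, hsr.symm⟩
  obtain ⟨d, rfl⟩ := Nat.exists_eq_add_of_le hij
  rw [pow_add 2 i d, mul_assoc] at hmod
  have cancelled := hmod.cancel_left_of_coprime (coprime_two_pow_sub_one (by omega) i)
  obtain ⟨rfl, hsr⟩ := hs.eq_of_two_pow_mul_modEq hh hr (by omega) cancelled.symm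
  exact ⟨rfl, hsr.symm⟩

lemma IsCosetLeader.not_dvd_two_pow_mul {h r : ℕ} (hh : h ≠ 0) (hr : IsCosetLeader h r) (i : ℕ) :
    ¬ 2 ^ (2 * h + 1) - 1 ∣ 2 ^ i * r := by
  intro hdvd
  have dvd_r := (coprime_two_pow_sub_one (by omega) i).dvd_of_dvd_mul_left hdvd
  exact Nat.not_dvd_of_pos_of_lt hr.1.pos (hr.2.1.trans_le (three_mul_two_pow_le hh)) dvd_r

end Cosets

section Kasami

variable {K : Type*} [Field K]

/-- The powers of `α` in which the Kasami sequence expands: `1` and the `2 ^ i`-th powers of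
`α ^ r`, for `r` a coset leader. -/
noncomputable def kasamiSpectrum (h : ℕ) (α : K) : Finset K :=
  insert 1 ((leaders h ×ˢ Finset.range (2 * h + 1)).image fun p => α ^ (2 ^ p.2 * p.1))

lemma injOn_pow_leaders {h : ℕ} (hh : h ≠ 0) {α : K} (hα : orderOf α = 2 ^ (2 * h + 1) - 1) :
    Set.InjOn (fun p : ℕ × ℕ => α ^ (2 ^ p.2 * p.1))
      (leaders h ×ˢ Finset.range (2 * h + 1) : Finset (ℕ × ℕ)) := by
  rintro ⟨r, i⟩ hr ⟨s, j⟩ hs heq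
  simp only [Finset.coe_product, Set.mem_prod, Finset.mem_coe, Finset.mem_range] at hr hs
  have α_finite : IsOfFinOrder α := by
    rw [← orderOf_pos_iff, hα]
    exact Nat.sub_pos_of_lt (Nat.one_lt_two_pow (by omega))
  rw [α_finite.pow_eq_pow_iff_modEq, hα] at heq
  obtain ⟨hij, hrs⟩ := (isCosetLeader_of_mem_leaders hr.1).eq_of_two_pow_mul_modEq_two_pow_mul hh
    (isCosetLeader_of_mem_leaders hs.1) hr.2 hs.2 heq
  exact Prod.ext hrs hij

lemma one_notMem_image_pow_leaders {h : ℕ} (hh : h ≠ 0) {α : K}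
    (hα : orderOf α = 2 ^ (2 * h + 1) - 1) :
    1 ∉ (leaders h ×ˢ Finset.range (2 * h + 1)).image fun p => α ^ (2 ^ p.2 * p.1) := by
  intro hmem
  obtain ⟨⟨r, i⟩, hr, heq⟩ := Finset.mem_image.1 hmem
  rw [← orderOf_dvd_iff_pow_eq_one, hα] at heq
  exact (isCosetLeader_of_mem_leaders (Finset.mem_product.1 hr).1).not_dvd_two_pow_mul hh i heq

lemma card_kasamiSpectrum {h : ℕ} (hh : h ≠ 0) {α : K} (hα : orderOf α = 2 ^ (2 * h + 1) - 1) :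
    (kasamiSpectrum h α).card = 1 + (2 * h + 1) * (leaders h).card := by
  rw [kasamiSpectrum, Finset.card_insert_of_notMem (one_notMem_image_pow_leaders hh hα),
    Finset.card_image_of_injOn (injOn_pow_leaders hh hα), Finset.card_product, Finset.card_range]
  ring

lemma pow_orderOf_eq_one_of_mem_kasamiSpectrum {h : ℕ} {α γ : K} (hγ : γ ∈ kasamiSpectrum h α) :
    γ ^ orderOf α = 1 := by
  rw [kasamiSpectrum, Finset.mem_insert, Finset.mem_image] at hγ
  obtain rfl | ⟨p, -, rfl⟩ := hγ
  · exact one_pow _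
  · rw [pow_right_comm, pow_orderOf_eq_one, one_pow]

variable [Algebra (ZMod 2) K] [Finite K]

lemma trace_kasami_eq_sum_leaders {h : ℕ} (hh : 2 ≤ h)
    (hK : Module.finrank (ZMod 2) K = 2 * h + 1) (y : K) :
    Algebra.trace (ZMod 2) K ((y + 1) ^ (2 ^ (2 * h) - 2 ^ h + 1))
      = 1 + ∑ r ∈ leaders h, Algebra.trace (ZMod 2) K (y ^ r) := by
  have trace_double (k : ℕ) :
      Algebra.trace (ZMod 2) K (y ^ (2 * k)) = Algebra.trace (ZMod 2) K (y ^ k) := by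
    simpa using trace_pow_two_pow_mul 1 k y
  have trace_coset : Algebra.trace (ZMod 2) K (y ^ (2 ^ h + 1))
      = Algebra.trace (ZMod 2) K (y ^ (2 ^ (h + 1) + 1)) := by
    simpa using trace_pow_two_pow_mul_add_one hK 1 y
  have trace_one : Algebra.trace (ZMod 2) K (y ^ 0) = 1 := by
    have := Algebra.trace_algebraMap (S := K) (1 : ZMod 2)
    rw [map_one, hK] at this
    simp [this, CharTwo.two_eq_zero]
  rw [trace_add_one_pow_kasami hK,
    sum_eq_sum_leaders (T := fun k => Algebra.trace (ZMod 2) K (y ^ k)) trace_double hh trace_coset,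
    trace_one]

lemma algebraMap_trace_kasami_eq_sum {h : ℕ} (hh : 2 ≤ h)
    (hK : Module.finrank (ZMod 2) K = 2 * h + 1) {α : K} (hα : orderOf α = 2 ^ (2 * h + 1) - 1)
    (t : ℕ) :
    algebraMap (ZMod 2) K
        (Algebra.trace (ZMod 2) K ((α ^ t + 1) ^ (2 ^ (2 * h) - 2 ^ h + 1)))
      = ∑ γ ∈ kasamiSpectrum h α, γ ^ t := by
  rw [trace_kasami_eq_sum_leaders hh hK, kasamiSpectrum,
    Finset.sum_insert (one_notMem_image_pow_leaders (by omega) hα),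
    Finset.sum_image (injOn_pow_leaders (by omega) hα), Finset.sum_product]
  simp only [map_add, map_one, map_sum, FiniteField.algebraMap_trace_eq_sum_pow, hK,
    Nat.card_zmod, one_pow, ← pow_mul]
  simp only [mul_comm, mul_assoc]

end Kasami

lemma natDegree_genPoly (m : ℕ) (α : GaloisField 2 m) (f : GaloisField 2 m → GaloisField 2 m) :
    (genPoly m α f).natDegree = linearSpan (2 ^ m - 1)
      fun t => Algebra.trace (ZMod 2) (GaloisField 2 m) (f (α ^ t + 1)) := by
  rw [genPoly, traceSeqPoly, linearSpan]
  congr!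

theorem stmt13_general {h : ℕ} (hh : 2 ≤ h) {K : Type*} [Field K] [Algebra (ZMod 2) K]
    (hK : Module.finrank (ZMod 2) K = 2 * h + 1) {α : K} (hα : orderOf α = 2 ^ (2 * h + 1) - 1) :
    linearSpan (2 ^ (2 * h + 1) - 1)
        (fun t => Algebra.trace (ZMod 2) K ((α ^ t + 1) ^ (2 ^ (2 * h) - 2 ^ h + 1)))
      = 1 + (2 * h + 1) * (if Even h then 2 ^ h - 1 else 2 ^ h - 3) := by
  have : Module.Finite (ZMod 2) K := Module.finite_of_finrank_pos (by omega)
  have : Finite K := Module.finite_of_finite (ZMod 2)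
  have : NeZero (orderOf α) := ⟨hα ▸ (Nat.sub_pos_of_lt (Nat.one_lt_two_pow (by omega))).ne'⟩
  rw [← card_leaders hh, ← card_kasamiSpectrum (by omega) hα, ← hα]
  refine linearSpan_eq_card (c := fun _ => 1) (IsPrimitiveRoot.orderOf α)
    (fun _ => pow_orderOf_eq_one_of_mem_kasamiSpectrum) (fun _ _ => one_ne_zero) fun t => ?_
  simpa using algebraMap_trace_kasami_eq_sum hh hK hα t

/-- For the Kasami monomial f₅(x) = x^{2^{2h}−2^h+1} = x^{2^{m−1}−2^{(m−1)/2}+1}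
over 𝔽_{2^m}, m ≥ 7 odd and h = (m−1)/2, the linear span of the sequence
s_t = Tr(f₅(α^t+1)) is L_s = 1 + m(2^{(m−1)/2} − 1) if m ≡ 1 (mod 4), and
L_s = 1 + m(2^{(m−1)/2} − 3) if m ≡ 3 (mod 4). -/
theorem stmt13 (m h : ℕ) (hm7 : 7 ≤ m) (hmo : Odd m) (hh : h = (m - 1) / 2)
    (α : GaloisField 2 m) (hα : orderOf α = 2 ^ m - 1)
    (f : GaloisField 2 m → GaloisField 2 m)
    (hf : ∀ x, f x = x ^ (2 ^ (2 * h) - 2 ^ h + 1)) :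
    (m % 4 = 1 →
      (genPoly m α f).natDegree = 1 + m * (2 ^ ((m - 1) / 2) - 1)) ∧
    (m % 4 = 3 →
      (genPoly m α f).natDegree = 1 + m * (2 ^ ((m - 1) / 2) - 3)) := by
  obtain ⟨k, rfl⟩ := hmo
  obtain rfl : h = k := by omega
  obtain rfl : f = fun x => x ^ (2 ^ (2 * h) - 2 ^ h + 1) := funext hf
  rw [natDegree_genPoly, stmt13_general (by omega) (GaloisField.finrank 2 (by omega)) hα, ← hh]
  exact ⟨fun hm => by rw [if_pos (by grind)], fun hm => by rw [if_neg (by grind)]⟩
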